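/- A typed monoid T = (M, G, E) is isomorphic (via a bijective typed monoid homomorphism) to the syntactic typed monoid syn(L) of some language L over some finite alphabet if, and only if, the following three conditions hold: T is reduced; M is generated as a monoid by E (every element of M is a finite product of elements of E); and G has exactly four or exactly two elements. -/

import Mathlib

universe u v w

/-- A typed monoid structure on a monoid `M`: a Boolean algebra `types` of subsets of `M`
(the types) together with a finite set `units` of units. -/
structure TypedMonoidOn (M : Type u) : Type u where
  types : Set (Set M)
  units : Set M
  empty_mem : ∅ ∈ types
  univ_mem : Set.univ ∈ types
  union_mem : ∀ {A B : Set M}, A ∈ types → B ∈ types → A ∪ B ∈ types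
  inter_mem : ∀ {A B : Set M}, A ∈ types → B ∈ types → A ∩ B ∈ types
  compl_mem : ∀ {A : Set M}, A ∈ types → Aᶜ ∈ types
  units_finite : units.Finite

/-- A typed monoid homomorphism: a monoid homomorphism `h₁`, a Boolean algebra
homomorphism `h₂` on types, and a map `h₃` on units, such that
`h₁(A) = h₂(A) ∩ h₁(S)` for every type `A` and `h₁(e) = h₃(e)` for every unit `e`. -/
structure TypedHom {S : Type u} {T : Type v} [Monoid S] [Monoid T]
    (T₁ : TypedMonoidOn S) (T₂ : TypedMonoidOn T) where
  h₁ : S →* T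
  h₂ : Set S → Set T
  h₃ : S → T
  h₂_mem : ∀ {A : Set S}, A ∈ T₁.types → h₂ A ∈ T₂.types
  h₂_empty : h₂ ∅ = ∅
  h₂_univ : h₂ Set.univ = Set.univ
  h₂_union : ∀ {A B : Set S}, A ∈ T₁.types → B ∈ T₁.types → h₂ (A ∪ B) = h₂ A ∪ h₂ B
  h₂_inter : ∀ {A B : Set S}, A ∈ T₁.types → B ∈ T₁.types → h₂ (A ∩ B) = h₂ A ∩ h₂ B
  h₂_compl : ∀ {A : Set S}, A ∈ T₁.types → h₂ Aᶜ = (h₂ A)ᶜ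
  h₃_mem : ∀ {e : S}, e ∈ T₁.units → h₃ e ∈ T₂.units
  cond_i : ∀ {A : Set S}, A ∈ T₁.types → ⇑h₁ '' A = h₂ A ∩ Set.range ⇑h₁
  cond_ii : ∀ {e : S}, e ∈ T₁.units → h₁ e = h₃ e

/-- A typed monoid homomorphism is injective if all three components are. -/
def TypedHom.IsInjective {S : Type u} {T : Type v} [Monoid S] [Monoid T]
    {T₁ : TypedMonoidOn S} {T₂ : TypedMonoidOn T} (h : TypedHom T₁ T₂) : Prop :=
  Function.Injective h.h₁ ∧ Set.InjOn h.h₂ T₁.types ∧ Set.InjOn h.h₃ T₁.units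

/-- A typed monoid homomorphism is surjective if all three components are. -/
def TypedHom.IsSurjective {S : Type u} {T : Type v} [Monoid S] [Monoid T]
    {T₁ : TypedMonoidOn S} {T₂ : TypedMonoidOn T} (h : TypedHom T₁ T₂) : Prop :=
  Function.Surjective h.h₁ ∧ T₂.types ⊆ h.h₂ '' T₁.types ∧ T₂.units ⊆ h.h₃ '' T₁.units

/-- A typed monoid homomorphism is bijective if all three components are. -/
def TypedHom.IsBijective {S : Type u} {T : Type v} [Monoid S] [Monoid T]
    {T₁ : TypedMonoidOn S} {T₂ : TypedMonoidOn T} (h : TypedHom T₁ T₂) : Prop :=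
  h.IsInjective ∧ h.IsSurjective

/-- `T₁` divides `T₂` if some typed submonoid of `T₂` (i.e. a typed monoid admitting an
injective typed homomorphism into `T₂`) surjects onto `T₁` by a typed homomorphism. -/
def TypedDivides {S : Type u} {T : Type v} [Monoid S] [Monoid T]
    (T₁ : TypedMonoidOn S) (T₂ : TypedMonoidOn T) : Prop :=
  ∃ (U : Type v) (_iU : Monoid U) (T' : TypedMonoidOn U)
    (hinj : TypedHom T' T₂) (hsur : TypedHom T' T₁),
    hinj.IsInjective ∧ hsur.IsSurjective

/-- The typed monoid `(Σ*, B_L, Σ)` associated with a language `L` over a finite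
alphabet `A`: the free monoid with the Boolean algebra `{∅, L, Lᶜ, Σ*}` of types
and the letters as units. -/
def langTM (A : Type u) [Fintype A] (L : Set (FreeMonoid A)) :
    TypedMonoidOn (FreeMonoid A) where
  types := {∅, L, Lᶜ, Set.univ}
  units := Set.range FreeMonoid.of
  empty_mem := by simp
  univ_mem := by simp
  union_mem := by
    rintro A B (rfl | rfl | rfl | rfl) (rfl | rfl | rfl | rfl) <;>
      simp [Set.union_self, Set.union_compl_self, Set.compl_union_self,
        Set.empty_union, Set.union_empty, Set.univ_union, Set.union_univ]
  inter_mem := by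
    rintro A B (rfl | rfl | rfl | rfl) (rfl | rfl | rfl | rfl) <;>
      simp [Set.inter_self, Set.inter_compl_self, Set.compl_inter_self,
        Set.empty_inter, Set.inter_empty, Set.univ_inter, Set.inter_univ]
  compl_mem := by
    rintro A (rfl | rfl | rfl | rfl) <;> simp
  units_finite := Set.finite_range _

/-- A typed monoid recognizes a language `L ⊆ Σ*` if there is a typed monoid
homomorphism from `(Σ*, B_L, Σ)` to it. -/
def Recognizes {M : Type u} [Monoid M] (T : TypedMonoidOn M)
    {A : Type v} [Fintype A] (L : Set (FreeMonoid A)) : Prop :=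
  Nonempty (TypedHom (langTM A L) T)

/-!
A bijective typed homomorphism `T → syn(L)` amounts to a surjection `φ : Σ* → M` whose kernel is
`∼_L` and which maps `B_L` and `Σ` onto the types and units of `T`. Since `L` is a union of
`∼_L`-classes, `L = φ⁻¹(S)` for `S = φ(L)`, so the types of `T` are `B_S`. Pulling `∼_S` back along
`φ` gives `∼_L`, hence `ker φ = ∼_L` says that `∼_S` is equality, which is reducedness of `T`.
Conversely, when the units generate `M` and the types are `B_S`, take the units as the alphabet,
evaluation of words as `φ`, and `L = φ⁻¹(S)`.
-/

section PrincipalTypes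

variable {M : Type u} {N : Type v}

/-- The Boolean algebra `B_S` of subsets of `M` generated by a single set `S`. -/
def principalTypes (S : Set M) : Set (Set M) := {∅, S, Sᶜ, Set.univ}

theorem image_principalTypes_preimage {f : N → M} (hf : f.Surjective) (S : Set M) :
    (f '' ·) '' principalTypes (f ⁻¹' S) = principalTypes S := by
  simp only [principalTypes, Set.image_insert_eq, Set.image_singleton, Set.image_empty,
    Set.image_univ, hf.range_eq, ← Set.preimage_compl, Set.image_preimage_eq _ hf]

theorem principalTypes_eq_pair_of_trivial {S : Set M} (hS : S = ∅ ∨ S = Set.univ) :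
    principalTypes S = {∅, Set.univ} := by
  rcases hS with rfl | rfl <;> ext B <;> simp [principalTypes]

theorem ncard_principalTypes_of_nontrivial {S : Set M} (hempty : S ≠ ∅) (huniv : S ≠ Set.univ) :
    (principalTypes S).ncard = 4 := by
  have : Nonempty M := (Set.nonempty_iff_ne_empty.2 hempty).to_type
  have hcompl : S ≠ Sᶜ := ne_compl_self
  refine Set.ncard_eq_four.2 ⟨∅, S, Sᶜ, Set.univ, hempty.symm, ?_, Set.empty_ne_univ, hcompl,
    huniv, ?_, rfl⟩
  · exact fun h => huniv (Set.compl_empty_iff.1 h.symm)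
  · exact fun h => hempty (Set.compl_univ_iff.1 h)

theorem ncard_principalTypes [Nonempty M] (S : Set M) :
    (principalTypes S).ncard = 4 ∨ (principalTypes S).ncard = 2 := by
  by_cases hS : S = ∅ ∨ S = Set.univ
  · right
    rw [principalTypes_eq_pair_of_trivial hS, Set.ncard_pair Set.empty_ne_univ]
  · left
    exact ncard_principalTypes_of_nontrivial (not_or.1 hS).1 (not_or.1 hS).2

theorem principalTypes_subset_types (T : TypedMonoidOn M) {S : Set M} (hS : S ∈ T.types) :
    principalTypes S ⊆ T.types := by
  rintro B (rfl | rfl | rfl | rfl)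
  exacts [T.empty_mem, hS, T.compl_mem hS, T.univ_mem]

theorem exists_types_eq_principalTypes (T : TypedMonoidOn M) (hfin : T.types.Finite)
    (hcard : T.types.ncard ≤ 4) : ∃ S, T.types = principalTypes S := by
  by_cases htriv : ∀ S ∈ T.types, S = ∅ ∨ S = Set.univ
  · refine ⟨∅, subset_antisymm ?_ (principalTypes_subset_types T T.empty_mem)⟩
    rw [principalTypes_eq_pair_of_trivial (.inl rfl)]
    exact htriv
  · push Not at htriv
    obtain ⟨S, hS, hempty, huniv⟩ := htriv
    refine ⟨S, (Set.eq_of_subset_of_ncard_le (principalTypes_subset_types T hS) ?_ hfin).symm⟩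
    rwa [ncard_principalTypes_of_nontrivial hempty.ne_empty huniv]

theorem exists_types_eq_principalTypes_iff [Nonempty M] (T : TypedMonoidOn M) :
    (∃ S, T.types = principalTypes S) ↔ T.types.ncard = 4 ∨ T.types.ncard = 2 := by
  constructor
  · rintro ⟨S, hS⟩
    exact hS ▸ ncard_principalTypes S
  · intro hcard
    exact exists_types_eq_principalTypes T (Set.finite_of_ncard_ne_zero (by omega)) (by omega)

end PrincipalTypes

section SyntacticCon

variable {M : Type u} {N : Type v} [Monoid M] [Monoid N]

/-- The syntactic congruence `∼_S` of a subset `S` of an arbitrary monoid: two elements are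
related if no two-sided context distinguishes them with respect to membership in `S`. -/
def syntacticCon (S : Set M) : Con M where
  r u v := ∀ x y, x * u * y ∈ S ↔ x * v * y ∈ S
  iseqv := ⟨fun _ _ _ => Iff.rfl, fun h x y => (h x y).symm, fun h k x y => (h x y).trans (k x y)⟩
  mul' {a b c d} hab hcd x y := by
    have hleft : x * (a * c) * y ∈ S ↔ x * (b * c) * y ∈ S := by
      simpa only [mul_assoc] using hab x (c * y)
    have hright : x * (b * c) * y ∈ S ↔ x * (b * d) * y ∈ S := by
      simpa only [mul_assoc] using hcd (x * b) y
    exact hleft.trans hright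

theorem syntacticCon_iff {S : Set M} {u v : M} :
    syntacticCon S u v ↔ ∀ x y, x * u * y ∈ S ↔ x * v * y ∈ S :=
  Iff.rfl

theorem mem_iff_mem_of_syntacticCon {S : Set M} {u v : M} (h : syntacticCon S u v) :
    u ∈ S ↔ v ∈ S := by
  simpa only [one_mul, mul_one] using h 1 1

theorem preimage_image_eq_of_ker_le_syntacticCon {φ : N →* M} {L : Set N}
    (hφ : Con.ker φ ≤ syntacticCon L) : φ ⁻¹' (φ '' L) = L := by
  refine subset_antisymm ?_ (Set.subset_preimage_image φ L)
  rintro u ⟨v, hv, hvu⟩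
  exact (mem_iff_mem_of_syntacticCon (hφ hvu)).1 hv

theorem syntacticCon_preimage_iff {φ : N →* M} (hφ : Function.Surjective φ) {S : Set M} {u v : N} :
    syntacticCon (φ ⁻¹' S) u v ↔ syntacticCon S (φ u) (φ v) := by
  simp only [syntacticCon_iff, hφ.forall, Set.mem_preimage, map_mul]

theorem ker_eq_syntacticCon_preimage_iff {φ : N →* M} (hφ : Function.Surjective φ) {S : Set M} :
    Con.ker φ = syntacticCon (φ ⁻¹' S) ↔ syntacticCon S = ⊥ := by
  simp only [Con.ext_iff, syntacticCon_preimage_iff hφ, Con.ker_rel, hφ.forall₂]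
  exact forall₂_congr fun _ _ => iff_comm

/-- The relation `∼_T` of `T` is equality: any two distinct elements are separated by some type
in some two-sided context. -/
def TypedMonoidOn.IsReduced (T : TypedMonoidOn M) : Prop :=
  ∀ s₁ s₂ : M, (∀ x y : M, ∀ A ∈ T.types, (x * s₁ * y ∈ A ↔ x * s₂ * y ∈ A)) → s₁ = s₂

theorem isReduced_iff_syntacticCon_eq_bot {T : TypedMonoidOn M} {S : Set M}
    (hS : T.types = principalTypes S) : T.IsReduced ↔ syntacticCon S = ⊥ := by
  have hsep (u v : M) : (∀ A ∈ principalTypes S, (u ∈ A ↔ v ∈ A)) ↔ (u ∈ S ↔ v ∈ S) := by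
    simp [principalTypes, not_iff_not]
  simp only [TypedMonoidOn.IsReduced, hS, hsep, eq_bot_iff]
  rfl

end SyntacticCon

section TypedImage

variable {M : Type u} {N : Type v} {P : Type w} [Monoid M] [Monoid N] [Monoid P]

/-- `φ` maps the typed monoid `T₁` onto `T₂`: the types and units of `T₂` are precisely the images
of those of `T₁`. Typed quotient maps and bijective typed homomorphisms are both of this kind. -/
structure IsTypedImage (T₁ : TypedMonoidOn N) (T₂ : TypedMonoidOn M) (φ : N →* M) : Prop where
  surjective : Function.Surjective φ
  types_eq : T₂.types = (φ '' ·) '' T₁.types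
  units_eq : T₂.units = φ '' T₁.units

theorem IsTypedImage.comp {T₁ : TypedMonoidOn N} {T₂ : TypedMonoidOn M} {T₃ : TypedMonoidOn P}
    {ψ : M →* P} {φ : N →* M} (hψ : IsTypedImage T₂ T₃ ψ) (hφ : IsTypedImage T₁ T₂ φ) :
    IsTypedImage T₁ T₃ (ψ.comp φ) where
  surjective := hψ.surjective.comp hφ.surjective
  types_eq := by
    simp only [hψ.types_eq, hφ.types_eq, Set.image_image, MonoidHom.coe_comp, Function.comp_apply]
  units_eq := by
    simp only [hψ.units_eq, hφ.units_eq, Set.image_image, MonoidHom.coe_comp, Function.comp_apply]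

theorem IsTypedImage.symm {T₁ : TypedMonoidOn N} {T₂ : TypedMonoidOn M} {e : N ≃* M}
    (he : IsTypedImage T₁ T₂ e.toMonoidHom) : IsTypedImage T₂ T₁ e.symm.toMonoidHom where
  surjective := e.symm.surjective
  types_eq := by simp [he.types_eq, Set.image_image]
  units_eq := by simp [he.units_eq, Set.image_image]

theorem TypedHom.IsSurjective.isTypedImage {T₁ : TypedMonoidOn N} {T₂ : TypedMonoidOn M}
    {h : TypedHom T₁ T₂} (hh : h.IsSurjective) : IsTypedImage T₁ T₂ h.h₁ := by
  obtain ⟨hsurj, htypes, hunits⟩ := hh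
  have himage : Set.EqOn h.h₂ (h.h₁ '' ·) T₁.types := fun A hA => by
    simp only [h.cond_i hA, hsurj.range_eq, Set.inter_univ]
  have hunit : Set.EqOn h.h₃ h.h₁ T₁.units := fun e he => (h.cond_ii he).symm
  refine ⟨hsurj, ?_, ?_⟩
  · rw [← himage.image_eq]
    exact htypes.antisymm (Set.image_subset_iff.2 fun _ hA => h.h₂_mem hA)
  · rw [← hunit.image_eq]
    exact hunits.antisymm (Set.image_subset_iff.2 fun _ he => h.h₃_mem he)

theorem TypedHom.IsBijective.exists_mulEquiv {T₁ : TypedMonoidOn N} {T₂ : TypedMonoidOn M}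
    {h : TypedHom T₁ T₂} (hh : h.IsBijective) :
    ∃ e : N ≃* M, IsTypedImage T₁ T₂ e.toMonoidHom :=
  ⟨MulEquiv.ofBijective h.h₁ ⟨hh.1.1, hh.2.1⟩, hh.2.isTypedImage⟩

/-- The typed monoid structure carried over from `M` to `N` along an isomorphism of monoids. -/
def TypedMonoidOn.map (T : TypedMonoidOn M) (e : M ≃* N) : TypedMonoidOn N where
  types := (e '' ·) '' T.types
  units := e '' T.units
  empty_mem := ⟨∅, T.empty_mem, Set.image_empty e⟩
  univ_mem := ⟨Set.univ, T.univ_mem, Set.image_univ_of_surjective e.surjective⟩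
  union_mem := by
    rintro _ _ ⟨A, hA, rfl⟩ ⟨B, hB, rfl⟩
    exact ⟨_, T.union_mem hA hB, Set.image_union e A B⟩
  inter_mem := by
    rintro _ _ ⟨A, hA, rfl⟩ ⟨B, hB, rfl⟩
    exact ⟨_, T.inter_mem hA hB, Set.image_inter e.injective⟩
  compl_mem := by
    rintro _ ⟨A, hA, rfl⟩
    exact ⟨_, T.compl_mem hA, Set.image_compl_eq e.bijective⟩
  units_finite := T.units_finite.image e

theorem isTypedImage_map (T : TypedMonoidOn M) (e : M ≃* N) :
    IsTypedImage T (T.map e) e.toMonoidHom :=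
  ⟨e.surjective, rfl, rfl⟩

/-- The isomorphism `e`, acting on types and units by direct image, as a typed homomorphism. -/
def TypedMonoidOn.toMap (T : TypedMonoidOn M) (e : M ≃* N) : TypedHom T (T.map e) where
  h₁ := e.toMonoidHom
  h₂ := (e '' ·)
  h₃ := e
  h₂_mem := Set.mem_image_of_mem _
  h₂_empty := Set.image_empty e
  h₂_univ := Set.image_univ_of_surjective e.surjective
  h₂_union _ _ := Set.image_union e _ _
  h₂_inter _ _ := Set.image_inter e.injective
  h₂_compl _ := Set.image_compl_eq e.bijective
  h₃_mem := Set.mem_image_of_mem e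
  cond_i {A} _ := (Set.inter_eq_left.2 (Set.image_subset_range e A)).symm
  cond_ii _ := rfl

theorem isBijective_toMap (T : TypedMonoidOn M) (e : M ≃* N) : (T.toMap e).IsBijective :=
  ⟨⟨e.injective, e.injective.image_injective.injOn, e.injective.injOn⟩,
    e.surjective, subset_rfl, subset_rfl⟩

end TypedImage

section SyntacticMorphism

variable {M : Type u} [Monoid M] {T : TypedMonoidOn M} {A : Type v} [Fintype A]
  {L : Set (FreeMonoid A)} {φ : FreeMonoid A →* M}

/-- `φ : Σ* → M` exhibits `T` as a copy of `syn(L)`: it maps `(Σ*, B_L, Σ)` onto `T` and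
identifies precisely the `∼_L`-equivalent words. -/
structure IsSyntacticMorphism (T : TypedMonoidOn M) (L : Set (FreeMonoid A))
    (φ : FreeMonoid A →* M) : Prop extends IsTypedImage (langTM A L) T φ where
  ker_eq : Con.ker φ = syntacticCon L

theorem IsSyntacticMorphism.types_eq_principalTypes (hφ : IsSyntacticMorphism T L φ) :
    T.types = principalTypes (φ '' L) := by
  have himage := image_principalTypes_preimage hφ.surjective (φ '' L)
  rw [preimage_image_eq_of_ker_le_syntacticCon hφ.ker_eq.le] at himage
  exact hφ.types_eq.trans himage

theorem IsSyntacticMorphism.isReduced (hφ : IsSyntacticMorphism T L φ) : T.IsReduced := by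
  rw [isReduced_iff_syntacticCon_eq_bot hφ.types_eq_principalTypes,
    ← ker_eq_syntacticCon_preimage_iff hφ.surjective,
    preimage_image_eq_of_ker_le_syntacticCon hφ.ker_eq.le]
  exact hφ.ker_eq

theorem IsSyntacticMorphism.closure_units (hφ : IsSyntacticMorphism T L φ) :
    Submonoid.closure T.units = ⊤ := by
  have hunits : T.units = φ '' Set.range FreeMonoid.of := hφ.units_eq
  rw [hunits, ← MonoidHom.map_mclosure, FreeMonoid.closure_range_of, ← MonoidHom.mrange_eq_map,
    MonoidHom.mrange_eq_top]
  exact hφ.surjective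

theorem exists_isSyntacticMorphism (hred : T.IsReduced) (hgen : Submonoid.closure T.units = ⊤)
    {S : Set M} (hS : T.types = principalTypes S) :
    ∃ (A : Type u) (_ : Fintype A) (L : Set (FreeMonoid A)) (φ : FreeMonoid A →* M),
      IsSyntacticMorphism T L φ := by
  let wordProd : FreeMonoid T.units →* M := FreeMonoid.lift Subtype.val
  have hwordProd : Function.Surjective wordProd := by
    rw [← MonoidHom.mrange_eq_top, FreeMonoid.mrange_lift, Subtype.range_coe, hgen]
  have hunits : T.units = wordProd '' Set.range FreeMonoid.of := by
    rw [← Set.range_comp, FreeMonoid.lift_comp_of, Subtype.range_coe]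
  let _ : Fintype T.units := T.units_finite.fintype
  refine ⟨T.units, inferInstance, wordProd ⁻¹' S, wordProd, ⟨hwordProd, ?_, hunits⟩, ?_⟩
  · exact hS.trans (image_principalTypes_preimage hwordProd S).symm
  · exact (ker_eq_syntacticCon_preimage_iff hwordProd).2
      ((isReduced_iff_syntacticCon_eq_bot hS).1 hred)

theorem exists_isSyntacticMorphism_of_isBijective {synL : TypedMonoidOn (syntacticCon L).Quotient}
    (hsyn : IsTypedImage (langTM A L) synL (syntacticCon L).mk') {h : TypedHom T synL}
    (hh : h.IsBijective) : ∃ φ : FreeMonoid A →* M, IsSyntacticMorphism T L φ := by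
  obtain ⟨e, he⟩ := hh.exists_mulEquiv
  refine ⟨e.symm.toMonoidHom.comp (syntacticCon L).mk', he.symm.comp hsyn, ?_⟩
  ext u v
  exact e.symm.injective.eq_iff.trans (Con.eq _)

theorem IsSyntacticMorphism.exists_isBijective (hφ : IsSyntacticMorphism T L φ) :
    ∃ synL : TypedMonoidOn (syntacticCon L).Quotient,
      IsTypedImage (langTM A L) synL (syntacticCon L).mk' ∧
        ∃ h : TypedHom T synL, h.IsBijective := by
  rw [← hφ.ker_eq]
  let e : M ≃* (Con.ker φ).Quotient := (Con.quotientKerEquivOfSurjective φ hφ.surjective).symm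
  have hmk : e.toMonoidHom.comp φ = (Con.ker φ).mk' :=
    MonoidHom.ext fun w => e.symm.injective (e.symm_apply_apply (φ w))
  exact ⟨T.map e, hmk ▸ (isTypedImage_map T e).comp hφ.toIsTypedImage, T.toMap e,
    isBijective_toMap T e⟩

end SyntacticMorphism

/-- A typed monoid `T = (M, G, E)` is isomorphic, via a bijective typed monoid
homomorphism, to the syntactic typed monoid `syn(L) = (Σ*, B_L, Σ)/∼_L` of some
language `L` over some finite alphabet if, and only if: `T` is reduced, `M` is
generated by its units `E`, and `G` has exactly four or exactly two elements. -/
theorem syntactic_typed_monoid_characterization {M : Type u} [Monoid M]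
    (T : TypedMonoidOn M) :
    (∃ (A : Type u) (_ : Fintype A) (L : Set (FreeMonoid A))
        (c : Con (FreeMonoid A)),
      (∀ u v : FreeMonoid A, c u v ↔
        ∀ w x : FreeMonoid A, (w * u * x ∈ L ↔ w * v * x ∈ L)) ∧
      ∃ synL : TypedMonoidOn c.Quotient,
        synL.types =
          (fun B => ⇑c.mk' '' B) '' ({∅, L, Lᶜ, Set.univ} : Set (Set (FreeMonoid A))) ∧
        synL.units = ⇑c.mk' '' (Set.range FreeMonoid.of) ∧
        ∃ h : TypedHom T synL, h.IsBijective)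
    ↔ ((∀ s₁ s₂ : M,
          (∀ x y : M, ∀ A ∈ T.types, (x * s₁ * y ∈ A ↔ x * s₂ * y ∈ A)) → s₁ = s₂) ∧
       (∀ m : M, m ∈ Submonoid.closure T.units) ∧
       (T.types.ncard = 4 ∨ T.types.ncard = 2)) := by
  constructor
  · rintro ⟨A, _, L, c, hc, synL, htypes, hunits, h, hh⟩
    obtain rfl : c = syntacticCon L := Con.ext hc
    obtain ⟨φ, hφ⟩ := exists_isSyntacticMorphism_of_isBijective
      ⟨Con.mk'_surjective, htypes, hunits⟩ hh
    exact ⟨hφ.isReduced, (Submonoid.eq_top_iff' _).1 hφ.closure_units,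
      (exists_types_eq_principalTypes_iff T).1 ⟨_, hφ.types_eq_principalTypes⟩⟩
  · rintro ⟨hred, hgen, hcard⟩
    obtain ⟨S, hS⟩ := (exists_types_eq_principalTypes_iff T).2 hcard
    obtain ⟨A, _, L, φ, hφ⟩ := exists_isSyntacticMorphism hred ((Submonoid.eq_top_iff' _).2 hgen) hS
    obtain ⟨synL, hsyn, hiso⟩ := hφ.exists_isBijective
    exact ⟨A, inferInstance, L, syntacticCon L, fun _ _ => syntacticCon_iff, synL, hsyn.types_eq,
      hsyn.units_eq, hiso⟩
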